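/- arXiv:1907.01999 — 2 statements merged into one kernel-verified Lean document; each statement's English description precedes it below -/
import Mathlib

section
/- The homotopy category functor ho : sSet → Cat (the left adjoint of the simplicial nerve functor) preserves finite products: for simplicial sets X and Y, the canonical functor ho(X × Y) → ho(X) × ho(Y) is an isomorphism of categories, and ho of the terminal simplicial set is the terminal category. -/
/-!
The homotopy category functor `ho : sSet ⥤ Cat` (the left adjoint of the simplicial
nerve functor) preserves finite products: the canonical comparison functor
`ho (X × Y) ⟶ ho X × ho Y` is an isomorphism of categories (an isomorphism in `Cat`),
and `ho` of the terminal simplicial set is the terminal category.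
-/

open CategoryTheory CategoryTheory.Limits

namespace Stmt5

universe u

lemma preservesFiniteProducts_of_natIso {C D : Type*} [Category* C] [Category* D]
    {F G : C ⥤ D} (e : F ≅ G) [PreservesFiniteProducts F] : PreservesFiniteProducts G where
  preserves _ := preservesLimitsOfShape_of_natIso e

theorem ho_preserves_finite_products_general
    {ho : SSet.{u} ⥤ Cat.{u, u}} (adj : ho ⊣ nerveFunctor) : PreservesFiniteProducts ho :=
  preservesFiniteProducts_of_natIso (nerveAdjunction.leftAdjointUniq adj)

theorem ho_preserves_finite_products
    (ho : SSet.{0} ⥤ Cat.{0, 0}) (adj : ho ⊣ nerveFunctor) :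
    (∀ X Y : SSet.{0}, IsIso (prodComparison ho X Y)) ∧
      IsIso (terminalComparison ho) := by
  have := ho_preserves_finite_products_general adj
  exact ⟨fun _ _ ↦ inferInstance, inferInstance⟩

end Stmt5
end

section
/- A quasi-category X is a Kan complex if and only if its homotopy category ho(X) is a groupoid. -/
/-!
A quasi-category `X` is a Kan complex if and only if its homotopy category `ho X` is a
groupoid, where `ho : sSet ⥤ Cat` denotes the homotopy category functor, i.e. the left
adjoint of the simplicial nerve functor.
-/

open CategoryTheory

namespace Stmt6

/-!
By duality it suffices to fill a horn `F : Λ[n + 2, 0] ⟶ X` whose edge `f = F(01) : x ⟶ y` is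
invertible. A homotopy inverse `g` of `f` gives a 3-simplex with vertices `x, y, x, y` and edges
`f, g, f` along its spine (`IsZigzag`). This 3-simplex becomes the first factor of
`Δ[n + 4] = Δ[3] ⋆ Δ[n]`; over the second factor, `F` is used with the vertices `0, 2` lying over
`x` and `1, 3` over `y`. Every extension that is then needed is inner, since the edge `23` carrying
`f` no longer starts at the initial vertex: one extends along the pivots `3` and `2`, corrects the
result along the degenerate edge `13` with pivot `1`, and restricts to the face `0, 3, 4, 5, …`,
where the missing simplex of the horn now lies.
-/

section Development

universe u

open Opposite Simplicial SSet Set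

section StdSubcomplex

variable {m n p : ℕ}

/-- A set of faces of `Δ[n]` closed under passing to subfaces, a face being encoded by its set of
vertices. -/
abbrev FaceSet (n : ℕ) : Type := LowerSet (Set (Fin (n + 1)))

/-- The subcomplex of `Δ[n]` spanned by the simplices whose set of vertices belongs to `K`. -/
def stdSubcomplex (K : FaceSet n) : (Δ[n] : SSet.{u}).Subcomplex where
  obj _ := Set.ofPred fun s => range (stdSimplex.asOrderHom s) ∈ K
  map g s hs := K.lower (range_comp_subset_range g.unop.toOrderHom (stdSimplex.asOrderHom s)) hs

lemma mem_stdSubcomplex {K : FaceSet n} {d : SimplexCategoryᵒᵖ}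
    {s : (Δ[n] : SSet.{u}).obj d} :
    s ∈ (stdSubcomplex K).obj d ↔ range (stdSimplex.asOrderHom s) ∈ K := Iff.rfl

lemma stdSubcomplex_mono {K L : FaceSet n} (h : K ≤ L) :
    stdSubcomplex.{u} K ≤ stdSubcomplex L :=
  fun _ _ hs => h hs

lemma bicartSq_stdSubcomplex (K L : FaceSet n) :
    Subcomplex.BicartSq (stdSubcomplex.{u} (K ⊓ L)) (stdSubcomplex K) (stdSubcomplex L)
      (stdSubcomplex (K ⊔ L)) where
  sup_eq := rfl
  inf_eq := rfl

/-- The sets of vertices of the simplices of the horn `Λ[n, i]`. -/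
def hornFaces (i : Fin (n + 1)) : FaceSet n where
  carrier := {S | ∃ j ∉ S, j ≠ i}
  lower' := fun _ _ hTS ⟨j, hj, hji⟩ => ⟨j, fun h => hj (hTS h), hji⟩

lemma horn_eq_stdSubcomplex (i : Fin (n + 1)) : Λ[n, i] = stdSubcomplex.{u} (hornFaces i) := by
  ext d s
  simp only [mem_horn_iff, mem_stdSubcomplex, ne_eq, eq_univ_iff_forall, not_forall]
  exact exists_congr fun j => by simp [and_comm]

/-- The inclusion between the subcomplexes of `Δ[n]` attached to `K ≤ L`. -/
abbrev inclusion {K L : FaceSet n} (h : K ≤ L) :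
    (stdSubcomplex K).toSSet ⟶ stdSubcomplex L :=
  Subcomplex.homOfLE (stdSubcomplex_mono h)

/-- `r` maps simplices with vertices in a member of `K` to ones with vertices in a member of `L`. -/
def MapsFaces (r : Fin (m + 1) → Fin (n + 1)) (K : FaceSet m) (L : FaceSet n) :
    Prop :=
  ∀ S ∈ K, MonotoneOn r S ∧ r '' S ∈ L

lemma MapsFaces.id {K L : FaceSet n} (h : K ≤ L) : MapsFaces id K L :=
  fun _ hS => ⟨monotoneOn_id, by simpa using h hS⟩

lemma MapsFaces.comp {K : FaceSet m} {L : FaceSet n}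
    {M : FaceSet p} {r : Fin (m + 1) → Fin (n + 1)}
    {q : Fin (n + 1) → Fin (p + 1)} (hq : MapsFaces q L M) (hr : MapsFaces r K L) :
    MapsFaces (q ∘ r) K M := fun S hS =>
  ⟨(hq _ (hr S hS).2).1.comp (hr S hS).1 (mapsTo_image r S),
    image_comp q r S ▸ (hq _ (hr S hS).2).2⟩

/-- The map of subcomplexes given on vertices by `r`, which only needs to be monotone on the members
of `K`. -/
def stdMap {K : FaceSet m} {L : FaceSet n}
    (r : Fin (m + 1) → Fin (n + 1)) (hr : MapsFaces r K L) :
    (stdSubcomplex K).toSSet ⟶ stdSubcomplex L where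
  app d := TypeCat.ofHom fun s => ⟨stdSimplex.objMk
    { toFun := r ∘ stdSimplex.asOrderHom s.1
      monotone' := fun a b hab => (hr _ s.2).1 (mem_range_self a) (mem_range_self b)
        ((stdSimplex.asOrderHom s.1).monotone hab) },
    by
      rw [mem_stdSubcomplex]
      have := (hr _ s.2).2
      rwa [← range_comp] at this⟩
  naturality _ _ _ := rfl

lemma hom_ext_vertices {K : FaceSet m} {L : FaceSet n}
    {f g : (stdSubcomplex K).toSSet ⟶ stdSubcomplex L}
    (h : ∀ d s a, stdSimplex.asOrderHom (f.app d s).1 a = stdSimplex.asOrderHom (g.app d s).1 a) :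
    f = g := by
  ext d s
  refine Subtype.ext (stdSimplex.objEquiv.injective ?_)
  ext a
  exact congrArg Fin.val (h d s a)

lemma stdMap_congr {K : FaceSet m} {L : FaceSet n}
    {r q : Fin (m + 1) → Fin (n + 1)} {hr : MapsFaces r K L} {hq : MapsFaces q K L}
    (h : ∀ S ∈ K, EqOn r q S) : stdMap.{u} r hr = stdMap q hq :=
  hom_ext_vertices fun _ s a => h _ s.2 (mem_range_self a)

lemma stdMap_eq_inclusion {K L : FaceSet n} (h : K ≤ L)
    {r : Fin (n + 1) → Fin (n + 1)} {hr : MapsFaces r K L} (h_id : ∀ S ∈ K, EqOn r id S) :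
    stdMap.{u} r hr = inclusion h :=
  hom_ext_vertices fun _ s a => h_id _ s.2 (mem_range_self a)

lemma exists_glue {K L : FaceSet n} {X : SSet.{u}}
    (f : (stdSubcomplex K).toSSet ⟶ X) (g : (stdSubcomplex L).toSSet ⟶ X)
    (h : inclusion inf_le_left ≫ f = inclusion inf_le_right ≫ g) :
    ∃ e : (stdSubcomplex (K ⊔ L)).toSSet ⟶ X,
      inclusion le_sup_left ≫ e = f ∧ inclusion le_sup_right ≫ e = g :=
  (bicartSq_stdSubcomplex K L).isPushout.exists_desc f g h

lemma hom_ext_of_le_sup {K L M : FaceSet n} {X : SSet.{u}}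
    (hK : K ≤ M) (hL : L ≤ M) (hM : M ≤ K ⊔ L) {f g : (stdSubcomplex M).toSSet ⟶ X}
    (h₁ : inclusion hK ≫ f = inclusion hK ≫ g) (h₂ : inclusion hL ≫ f = inclusion hL ≫ g) :
    f = g := by
  obtain rfl := hM.antisymm (sup_le hK hL)
  exact (bicartSq_stdSubcomplex K L).isPushout.hom_ext h₁ h₂

/-- Every map from `stdSubcomplex K` to `X` extends to `stdSubcomplex L`. -/
def HasExtensions (X : SSet.{u}) {K L : FaceSet n} (h : K ≤ L) : Prop :=
  ∀ f : (stdSubcomplex K).toSSet ⟶ X, ∃ g : (stdSubcomplex L).toSSet ⟶ X, inclusion h ≫ g = f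

lemma HasExtensions.trans {X : SSet.{u}} {K L M : FaceSet n} {h : K ≤ L}
    {h' : L ≤ M} (hKL : HasExtensions X h) (hLM : HasExtensions X h') :
    HasExtensions X (h.trans h') := fun f => by
  obtain ⟨g, rfl⟩ := hKL f
  obtain ⟨e, rfl⟩ := hLM g
  exact ⟨e, rfl⟩

/-- Every horn `Λ[n, i] ⟶ X` has a filler. -/
def HasFillers (X : SSet.{u}) (i : Fin (n + 1)) : Prop :=
  ∀ f : (Λ[n, i] : SSet.{u}) ⟶ X, ∃ g : Δ[n] ⟶ X, f = Λ[n, i].ι ≫ g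

lemma hasExtensions_hornFaces_iff {X : SSet.{u}} {i : Fin (n + 1)} :
    HasExtensions X (le_top : hornFaces i ≤ ⊤) ↔ HasFillers X i := by
  rw [HasExtensions, HasFillers, horn_eq_stdSubcomplex]
  refine forall_congr' fun f => ⟨fun ⟨g, hg⟩ => ⟨(Subcomplex.topIso _).inv ≫ g, hg.symm⟩,
    fun ⟨g, hg⟩ => ⟨(Subcomplex.topIso _).hom ≫ g, hg.symm⟩⟩

lemma HasExtensions.sup_Iic_range {X : SSet.{u}} {M : FaceSet m}
    {K : FaceSet n} (hX : HasExtensions X (le_top : M ≤ ⊤))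
    (e : Fin (m + 1) ↪o Fin (n + 1)) (he : ∀ S, e '' S ∈ K ↔ S ∈ M) :
    HasExtensions X (le_sup_left : K ≤ K ⊔ LowerSet.Iic (range e)) := fun f => by
  have e_maps : MapsFaces e M K := fun S hS => ⟨e.monotone.monotoneOn S, (he S).2 hS⟩
  obtain ⟨g, hg⟩ := hX (stdMap e e_maps ≫ f)
  set r := Function.invFun e
  have e_r : ∀ S ∈ LowerSet.Iic (range e), EqOn (e ∘ r) id S :=
    fun S hS v hv => Function.invFun_eq (hS hv)
  have r_mono : ∀ S ∈ LowerSet.Iic (range e), MonotoneOn r S := fun S hS v hv w hw hvw =>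
    e.le_iff_le.1 ((e_r S hS hv).trans_le (hvw.trans_eq (e_r S hS hw).symm))
  have r_maps : MapsFaces r (K ⊓ LowerSet.Iic (range e)) M := fun S hS =>
    ⟨r_mono S hS.2, (he _).1 (by rw [← image_comp, (e_r S hS.2).image_eq, image_id]; exact hS.1)⟩
  have r_maps_top : MapsFaces r (LowerSet.Iic (range e)) ⊤ := fun S hS => ⟨r_mono S hS, trivial⟩
  obtain ⟨E, hE, -⟩ := exists_glue f (stdMap r r_maps_top ≫ g) <| calc
    inclusion inf_le_left ≫ f = stdMap r r_maps ≫ stdMap e e_maps ≫ f := by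
      rw [← stdMap_eq_inclusion (r := e ∘ r) (hr := e_maps.comp r_maps) _
        fun S hS => e_r S hS.2]
      rfl
    _ = inclusion inf_le_right ≫ stdMap r _ ≫ g := by rw [← hg]; rfl
  exact ⟨E, hE⟩

lemma hasExtensions_sup_Iic {X : SSet.{u}} [Quasicategory X] {K : FaceSet n}
    {T : Set (Fin (n + 1))} {a v b : Fin (n + 1)} (ha : a ∈ T) (hv : v ∈ T) (hb : b ∈ T)
    (hav : a < v) (hvb : v < b) (hT : ∀ U ⊆ T, U ∈ K ↔ ¬ T \ {v} ⊆ U) :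
    HasExtensions X (le_sup_left : K ≤ K ⊔ LowerSet.Iic T) := by
  classical
  obtain ⟨m, hm⟩ : ∃ m, T.toFinset.card = m + 1 :=
    Nat.exists_eq_add_one.2 (Finset.card_pos.2 ⟨v, mem_toFinset.2 hv⟩)
  set e := T.toFinset.orderEmbOfFin hm
  have range_e : range e = T := by simp [e]
  obtain ⟨a, rfl⟩ := range_e.symm ▸ ha
  obtain ⟨i, rfl⟩ := range_e.symm ▸ hv
  obtain ⟨b, rfl⟩ := range_e.symm ▸ hb
  have horn_ext : HasExtensions X (le_top : hornFaces i ≤ ⊤) :=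
    hasExtensions_hornFaces_iff.2 fun f => Quasicategory.hornFilling
      ((Fin.zero_le a).trans_lt (e.lt_iff_lt.1 hav))
      ((e.lt_iff_lt.1 hvb).trans_le (Fin.le_last b)) f
  rw [← range_e] at hT ⊢
  refine horn_ext.sup_Iic_range e fun S => ?_
  rw [hT _ (image_subset_range e S), not_subset]
  constructor
  · rintro ⟨_, ⟨⟨j, rfl⟩, hj⟩, hjS⟩
    exact ⟨j, fun h => hjS (mem_image_of_mem e h), fun h => hj (congrArg e h)⟩
  · rintro ⟨j, hjS, hj⟩
    exact ⟨e j, ⟨mem_range_self j, fun h => hj (e.injective h)⟩,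
      fun h => hjS (e.injective.mem_set_image.1 h)⟩

/-- `L` arises from `K` by filling inner horns whose missing face is opposite to `v`: the faces in
`L` but not in `K` are paired by inserting and removing `v`, and have vertices on both sides of
`v`. -/
structure IsInnerPivot (K L : FaceSet n) (v : Fin (n + 1)) : Prop where
  insert_mem : ∀ S ∈ L, S ∉ K → insert v S ∈ L
  diff_notMem : ∀ S ∈ L, S ∉ K → S \ {v} ∉ K
  exists_lt : ∀ S ∈ L, S ∉ K → ∃ a ∈ S, a < v
  exists_gt : ∀ S ∈ L, S ∉ K → ∃ b ∈ S, v < b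

namespace IsInnerPivot

variable {K L : FaceSet n} {v : Fin (n + 1)} {S : Set (Fin (n + 1))}

lemma sup_Iic (h : IsInnerPivot K L v) :
    IsInnerPivot (K ⊔ LowerSet.Iic (insert v S)) L v where
  insert_mem U hU hUK := h.insert_mem U hU fun hK => hUK (.inl hK)
  diff_notMem U hU hUK := by
    rintro (hK | hle)
    · exact h.diff_notMem U hU (fun hK => hUK (.inl hK)) hK
    · exact hUK (.inr (by simpa using sdiff_subset_iff.1 hle))
  exists_lt U hU hUK := h.exists_lt U hU fun hK => hUK (.inl hK)
  exists_gt U hU hUK := h.exists_gt U hU fun hK => hUK (.inl hK)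

lemma hasExtensions_of_minimal (h : IsInnerPivot K L v) (hS : Minimal (fun S => S ∈ L ∧ S ∉ K) S)
    (X : SSet.{u}) [Quasicategory X] :
    HasExtensions X (le_sup_left : K ≤ K ⊔ LowerSet.Iic (insert v S)) := by
  obtain ⟨⟨hSL, hSK⟩, hmin⟩ := hS
  obtain ⟨a, ha, hav⟩ := h.exists_lt S hSL hSK
  obtain ⟨b, hb, hvb⟩ := h.exists_gt S hSL hSK
  refine hasExtensions_sup_Iic (mem_insert_of_mem v ha) (mem_insert v S) (mem_insert_of_mem v hb)
    hav hvb fun U hU => ⟨fun hUK hle => ?_, fun hle => ?_⟩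
  · exact h.diff_notMem S hSL hSK
      (K.lower ((sdiff_subset_sdiff_left (subset_insert v S)).trans hle) hUK)
  · by_contra hUK
    have hUL : U ∈ L := L.lower hU (h.insert_mem S hSL hSK)
    have hUS : U \ {v} ⊆ S := by simpa [sdiff_subset_iff] using hU
    have hSU : S ⊆ U \ {v} := hmin ⟨L.lower sdiff_le hUL, h.diff_notMem U hUL hUK⟩ hUS
    exact hle (by
      simpa [sdiff_subset_iff] using hSU.trans sdiff_subset |>.trans (subset_insert v U))

theorem hasExtensions (h : IsInnerPivot K L v) (hKL : K ≤ L) (X : SSet.{u}) [Quasicategory X] :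
    HasExtensions X hKL := by
  induction K using WellFoundedGT.induction with
  | ind K ih =>
    obtain rfl | hlt := hKL.eq_or_lt
    · exact fun f => ⟨f, rfl⟩
    obtain ⟨S, hS⟩ :=
      ({S | S ∈ L ∧ S ∉ K} : Set _).toFinite.exists_minimal (not_subset.1 hlt.not_ge)
    have hle : K ⊔ LowerSet.Iic (insert v S) ≤ L :=
      sup_le hKL (LowerSet.Iic_le.2 (h.insert_mem S hS.prop.1 hS.prop.2))
    refine (h.hasExtensions_of_minimal hS X).trans (ih _ ?_ h.sup_Iic hle)
    refine le_sup_left.lt_of_not_ge fun hge => hS.prop.2 (K.lower (subset_insert v S) ?_)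
    exact hge (.inr (LowerSet.mem_Iic_iff.2 le_rfl))

end IsInnerPivot

end StdSubcomplex

section OuterHorn

variable {n : ℕ}

/-- The sets of vertices which do not contain the vertex number `k`. -/
def avoiding (k : ℕ) : FaceSet n where
  carrier := {S | ∀ s ∈ S, s.1 ≠ k}
  lower' := fun _ _ hTS hS s hs => hS s (hTS hs)

/-- The faces of `Δ[3] ⋆ ∂Δ[n]` in `Δ[n + 4] = Δ[3] ⋆ Δ[n]`; the vertices `≥ 4` are those of
`Δ[n]`. -/
def joinBoundary : FaceSet (n + 4) where
  carrier := {S | ∃ q : Fin (n + 4 + 1), 4 ≤ q.1 ∧ q ∉ S}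
  lower' := fun _ _ hTS ⟨q, hq, hqS⟩ => ⟨q, hq, fun h => hqS (hTS h)⟩

/-- The faces of `Δ[n + 4] = Δ[3] ⋆ Δ[n]` over which a zigzag spreads first: `Δ[3] ⋆ ∂Δ[n]` together
with `{0, 2} ⋆ Δ[n]`. -/
def zigzagHorn : FaceSet (n + 4) := joinBoundary ⊔ avoiding 1 ⊓ avoiding 3

/-- Faces on which identifying `0` with `2` and `1` with `3` preserves the order. -/
def zigzagFaces : FaceSet n := avoiding 1 ⊔ avoiding 0 ⊓ avoiding 2

/-- The faces which `fold` maps monotonically into the horn `Λ[n + 2, 0]`. -/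
def foldable : FaceSet (n + 4) := zigzagFaces ⊓ zigzagHorn

/-- The faces of `Δ[3]` in `Δ[n + 4] = Δ[3] ⋆ Δ[n]`. -/
def head : FaceSet (n + 4) := LowerSet.Iic {v | v.1 ≤ 3}

lemma mem_avoiding {k : ℕ} {S : Set (Fin (n + 1))} : S ∈ avoiding k ↔ ∀ s ∈ S, s.1 ≠ k := Iff.rfl

lemma mem_zigzagFaces {S : Set (Fin (n + 1))} : S ∈ zigzagFaces ↔
    (∀ s ∈ S, s.1 ≠ 1) ∨ (∀ s ∈ S, s.1 ≠ 0) ∧ ∀ s ∈ S, s.1 ≠ 2 := Iff.rfl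

lemma mem_zigzagHorn {S : Set (Fin (n + 4 + 1))} : S ∈ zigzagHorn ↔
    (∃ q : Fin (n + 4 + 1), 4 ≤ q.1 ∧ q ∉ S) ∨ (∀ s ∈ S, s.1 ≠ 1) ∧ ∀ s ∈ S, s.1 ≠ 3 := Iff.rfl

lemma mem_foldable {S : Set (Fin (n + 4 + 1))} :
    S ∈ foldable ↔ S ∈ zigzagFaces ∧ S ∈ zigzagHorn := Iff.rfl

lemma mem_head {S : Set (Fin (n + 4 + 1))} : S ∈ head ↔ ∀ s ∈ S, s.1 ≤ 3 := Iff.rfl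

lemma exists_val_eq_four : ∃ q : Fin (n + 4 + 1), q.1 = 4 := ⟨⟨4, by omega⟩, rfl⟩

lemma head_sup_foldable_le : (head ⊔ foldable : FaceSet (n + 4)) ≤ zigzagHorn := by
  obtain ⟨q, hq⟩ := exists_val_eq_four (n := n)
  exact sup_le (fun S hS => .inl ⟨q, hq.ge, fun h => by grind [mem_head.1 hS q h]⟩) inf_le_right

lemma foldable_le : (foldable : FaceSet (n + 4)) ≤ zigzagHorn ⊔ avoiding 3 :=
  inf_le_right.trans le_sup_left

lemma isInnerPivot_three :
    IsInnerPivot (head ⊔ foldable) (zigzagHorn : FaceSet (n + 4)) ⟨3, by omega⟩ := by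
  constructor <;> intro S hS hSK <;>
    simp only [LowerSet.mem_sup_iff, mem_head, mem_foldable, mem_zigzagHorn,
      mem_zigzagFaces] at * <;> grind

lemma isInnerPivot_two : IsInnerPivot zigzagHorn
    (zigzagHorn ⊔ avoiding 3 : FaceSet (n + 4)) ⟨2, by omega⟩ := by
  have := exists_val_eq_four (n := n)
  constructor <;> intro S hS hSK <;>
    simp only [LowerSet.mem_sup_iff, mem_avoiding, mem_zigzagHorn] at * <;> grind

lemma isInnerPivot_one :
    IsInnerPivot (avoiding 0 ⊓ avoiding 2 ⊔ avoiding 2 ⊓ (zigzagHorn ⊔ avoiding 3))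
      (avoiding 2 : FaceSet (n + 4)) ⟨1, by omega⟩ := by
  constructor <;> intro S hS hSK <;>
    simp only [LowerSet.mem_sup_iff, LowerSet.mem_inf_iff, mem_avoiding, mem_zigzagHorn] at * <;>
    grind

/-- Identifies `0` with `2` and `1` with `3` and shifts down the other vertices. -/
def fold (v : Fin (n + 4 + 1)) : Fin (n + 2 + 1) := ⟨if v.1 = 1 then 1 else v.1 - 2, by grind⟩

/-- The section `0, 3, 4, 5, …` of `fold`. -/
def foldSection (v : Fin (n + 2 + 1)) : Fin (n + 4 + 1) :=
  ⟨if v.1 = 0 then 0 else v.1 + 2, by grind⟩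

/-- Moves the vertex `3` to `1`. -/
def threeToOne (v : Fin (n + 4 + 1)) : Fin (n + 4 + 1) := ⟨if v.1 = 3 then 1 else v.1, by grind⟩

/-- The retraction of `Δ[n + 4] = Δ[3] ⋆ Δ[n]` onto `Δ[3]` which collapses `Δ[n]` to `3`. -/
def toHead (v : Fin (n + 4 + 1)) : Fin 4 := ⟨min v.1 3, by omega⟩

/-- The vertices `0, 1, 2, 3` of a zigzag lie over the vertices `0, 1, 0, 1` of an edge. -/
def parity (v : Fin 4) : Fin 2 := ⟨v.1 % 2, by omega⟩

lemma mapsFaces_fold : MapsFaces fold foldable (hornFaces (0 : Fin (n + 2 + 1))) := fun S hS => by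
  rw [mem_foldable, mem_zigzagFaces, mem_zigzagHorn] at hS
  refine ⟨by intro a ha b hb hab; grind [fold], ?_⟩
  obtain ⟨-, (⟨q, hq, hqS⟩ | ⟨h₁, h₃⟩)⟩ := hS
  · refine ⟨⟨q.1 - 2, by omega⟩, ?_, ?_⟩ <;> grind [fold]
  · refine ⟨⟨1, by omega⟩, ?_, ?_⟩ <;> grind [fold]

lemma mapsFaces_foldSection : MapsFaces foldSection ⊤ (avoiding 2 : FaceSet (n + 4)) :=
  fun S _ =>
    ⟨by intro a _ b _ hab; grind [foldSection], by rw [mem_avoiding]; grind [foldSection]⟩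

lemma mapsFaces_foldSection_hornFaces :
    MapsFaces foldSection (hornFaces (0 : Fin (n + 2 + 1))) foldable := fun S ⟨j, hjS, hj⟩ => by
  refine ⟨(mapsFaces_foldSection S trivial).1, ?_⟩
  have : ∃ q : Fin (n + 4 + 1), q.1 = j.1 + 2 := ⟨⟨j.1 + 2, by omega⟩, rfl⟩
  rw [mem_foldable, mem_zigzagFaces, mem_zigzagHorn]
  grind [foldSection]

lemma stdMap_foldSection_fold :
    stdMap.{u} _ (mapsFaces_fold.comp mapsFaces_foldSection_hornFaces) =
      𝟙 (stdSubcomplex (hornFaces (0 : Fin (n + 2 + 1)))).toSSet :=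
  stdMap_eq_inclusion le_rfl fun _ _ v _ => by grind [fold, foldSection]

lemma mapsFaces_threeToOne : MapsFaces threeToOne (avoiding 0 ⊓ avoiding 2)
    (zigzagHorn ⊔ avoiding 3 : FaceSet (n + 4)) := fun S hS => by
  simp only [LowerSet.mem_sup_iff, LowerSet.mem_inf_iff, mem_avoiding] at *
  exact ⟨by intro a ha b hb hab; grind [threeToOne], by grind [threeToOne]⟩

lemma mapsFaces_threeToOne_foldable :
    MapsFaces threeToOne (avoiding 0 ⊓ avoiding 2 ⊓ joinBoundary)
      (foldable : FaceSet (n + 4)) := fun S ⟨hS, q, hq, hqS⟩ => by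
  refine ⟨(mapsFaces_threeToOne S hS).1, ?_⟩
  simp only [LowerSet.mem_inf_iff, mem_avoiding, mem_foldable, mem_zigzagHorn,
    mem_zigzagFaces] at *
  grind [threeToOne]

lemma mapsFaces_parity : MapsFaces parity zigzagFaces ⊤ := fun S hS => by
  rw [mem_zigzagFaces] at hS
  exact ⟨by intro a ha b hb hab; grind [parity], trivial⟩

lemma mapsFaces_toHead : MapsFaces toHead (head : FaceSet (n + 4)) ⊤ :=
  fun S _ => ⟨by intro a _ b _ hab; grind [toHead], trivial⟩

lemma mapsFaces_toHead_inf :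
    MapsFaces toHead (head ⊓ foldable : FaceSet (n + 4)) zigzagFaces := fun S hS => by
  refine ⟨(mapsFaces_toHead S hS.1).1, ?_⟩
  have h := mem_zigzagFaces.1 hS.2.1
  rw [mem_zigzagFaces]
  grind [toHead]

lemma mapsFaces_castLE :
    MapsFaces (Fin.castLE (by omega)) (⊤ : FaceSet 1) (hornFaces (0 : Fin (n + 2 + 1))) :=
  fun S _ => ⟨by intro a _ b _ hab; grind, ⟨⟨2, by omega⟩,
    fun ⟨v, _, hv⟩ => v.2.ne (congrArg Fin.val hv), by grind⟩⟩

variable {X : SSet.{u}}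

/-- A zigzag on an edge `f : x ⟶ y` is a 3-simplex with vertices `x, y, x, y` whose face `023` is a
degeneracy of `f` and whose edge `13` is degenerate, so that its edge `12` is a homotopy inverse of
`f`. -/
def IsZigzag (f : (stdSubcomplex (⊤ : FaceSet 1)).toSSet ⟶ X)
    (x : (stdSubcomplex (⊤ : FaceSet 3)).toSSet ⟶ X) : Prop :=
  inclusion (le_top : zigzagFaces ≤ ⊤) ≫ x = stdMap parity mapsFaces_parity ≫ f

lemma IsZigzag.toHead_comp_eq_fold_comp
    {F : (stdSubcomplex (hornFaces (0 : Fin (n + 2 + 1)))).toSSet ⟶ X}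
    {x : (stdSubcomplex (⊤ : FaceSet 3)).toSSet ⟶ X}
    (hx : IsZigzag (stdMap _ mapsFaces_castLE ≫ F) x) :
    inclusion inf_le_left ≫ stdMap toHead mapsFaces_toHead ≫ x =
      inclusion inf_le_right ≫ stdMap fold mapsFaces_fold ≫ F := by
  have maps_toHead :=
    (mapsFaces_castLE (n := n).comp mapsFaces_parity).comp (mapsFaces_toHead_inf (n := n))
  have toHead_eq_fold : stdMap.{u} _ maps_toHead =
      stdMap fold (mapsFaces_fold.comp (.id inf_le_right)) :=
    stdMap_congr fun S hS v hv => by grind [parity, toHead, fold, hS.1 hv]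
  calc
    _ = stdMap toHead mapsFaces_toHead_inf ≫ inclusion (le_top : zigzagFaces ≤ ⊤) ≫ x := rfl
    _ = stdMap _ maps_toHead ≫ F := by rw [hx]; rfl
    _ = _ := by rw [toHead_eq_fold]; rfl

lemma IsZigzag.exists_extension [Quasicategory X]
    {F : (stdSubcomplex (hornFaces (0 : Fin (n + 2 + 1)))).toSSet ⟶ X}
    {x : (stdSubcomplex (⊤ : FaceSet 3)).toSSet ⟶ X}
    (hx : IsZigzag (stdMap _ mapsFaces_castLE ≫ F) x) :
    ∃ G : (stdSubcomplex (zigzagHorn ⊔ avoiding 3)).toSSet ⟶ X,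
      inclusion foldable_le ≫ G = stdMap fold mapsFaces_fold ≫ F := by
  obtain ⟨F₁, -, hF₁⟩ := exists_glue _ _ hx.toHead_comp_eq_fold_comp
  obtain ⟨G, hG⟩ := (isInnerPivot_three.hasExtensions head_sup_foldable_le X).trans
    (isInnerPivot_two.hasExtensions le_sup_left X) F₁
  exact ⟨G, by rw [← hF₁, ← hG]; rfl⟩

lemma threeToOne_comp_eq_inclusion_comp
    {F : (stdSubcomplex (hornFaces (0 : Fin (n + 2 + 1)))).toSSet ⟶ X}
    {G : (stdSubcomplex (zigzagHorn ⊔ avoiding 3)).toSSet ⟶ X}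
    (hG : inclusion foldable_le ≫ G = stdMap fold mapsFaces_fold ≫ F) :
    inclusion inf_le_left ≫ stdMap threeToOne mapsFaces_threeToOne ≫ G =
      inclusion inf_le_right ≫
        inclusion (inf_le_right : avoiding 2 ⊓ (zigzagHorn ⊔ avoiding 3) ≤ _) ≫ G := by
  set N : FaceSet (n + 4) := avoiding 0 ⊓ avoiding 2 ⊓ (avoiding 2 ⊓ (zigzagHorn ⊔ avoiding 3))
  have boundary_le : avoiding 0 ⊓ avoiding 2 ⊓ joinBoundary ≤ N :=
    fun S hS => ⟨hS.1, hS.1.2, .inl (.inl hS.2)⟩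
  have avoiding_le : avoiding 0 ⊓ avoiding 2 ⊓ avoiding 3 ≤ N :=
    fun S hS => ⟨hS.1, hS.1.2, .inr hS.2⟩
  have le_sup : N ≤ avoiding 0 ⊓ avoiding 2 ⊓ joinBoundary ⊔ avoiding 0 ⊓ avoiding 2 ⊓ avoiding 3 :=
    fun S hS => hS.2.2.elim (.imp (⟨hS.1, ·⟩) (⟨hS.1, ·.2⟩)) (.inr ⟨hS.1, ·⟩)
  have le_foldable : avoiding 0 ⊓ avoiding 2 ⊓ joinBoundary ≤
      (foldable : FaceSet (n + 4)) := fun S hS => ⟨.inr hS.1, .inl hS.2⟩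
  have fold_threeToOne : stdMap.{u} (fold ∘ threeToOne)
      (mapsFaces_fold.comp mapsFaces_threeToOne_foldable) =
      stdMap fold (mapsFaces_fold.comp (.id le_foldable)) := stdMap_congr fun S hS v hv => by
    grind [fold, threeToOne, hS.1.1 v hv, hS.1.2 v hv]
  refine hom_ext_of_le_sup boundary_le avoiding_le le_sup ?_ ?_
  · calc
      _ = stdMap threeToOne mapsFaces_threeToOne_foldable ≫ inclusion foldable_le ≫ G := rfl
      _ = stdMap _ (mapsFaces_fold.comp mapsFaces_threeToOne_foldable) ≫ F := by rw [hG]; rfl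
      _ = inclusion le_foldable ≫ stdMap fold mapsFaces_fold ≫ F := by rw [fold_threeToOne]; rfl
      _ = _ := by rw [← hG]; rfl
  · have threeToOne_eq : stdMap.{u} _ (mapsFaces_threeToOne.comp
        (.id inf_le_left : MapsFaces id (avoiding 0 ⊓ avoiding 2 ⊓ avoiding 3) _)) =
        inclusion (avoiding_le.trans (inf_le_right.trans inf_le_right)) :=
      stdMap_eq_inclusion _ fun S hS v hv => by grind [threeToOne, hS.2 v hv]
    exact congrArg (· ≫ G) threeToOne_eq

theorem hasExtensions_of_exists_isZigzag [Quasicategory X] (hX : ∀ f, ∃ x, IsZigzag (X := X) f x) :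
    HasExtensions X (le_top : hornFaces (0 : Fin (n + 2 + 1)) ≤ ⊤) := fun F => by
  obtain ⟨x, hx⟩ := hX (stdMap _ mapsFaces_castLE ≫ F)
  obtain ⟨G, hG⟩ := hx.exists_extension
  obtain ⟨G₁, -, hG₁⟩ := exists_glue _ _ (threeToOne_comp_eq_inclusion_comp hG)
  have le_avoiding : avoiding 0 ⊓ avoiding 2 ⊔ avoiding 2 ⊓ (zigzagHorn ⊔ avoiding 3) ≤
    (avoiding 2 : FaceSet (n + 4)) := sup_le inf_le_right inf_le_left
  obtain ⟨H, hH⟩ := isInnerPivot_one.hasExtensions le_avoiding X G₁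
  have maps_inf : MapsFaces foldSection (hornFaces (0 : Fin (n + 2 + 1)))
      (avoiding 2 ⊓ (zigzagHorn ⊔ avoiding 3)) := fun S hS =>
    ⟨(mapsFaces_foldSection S trivial).1, (mapsFaces_foldSection S trivial).2,
      .inl (mapsFaces_foldSection_hornFaces S hS).2.2⟩
  refine ⟨stdMap foldSection mapsFaces_foldSection ≫ H, ?_⟩
  calc
    _ = stdMap foldSection maps_inf ≫ inclusion le_sup_right ≫ inclusion le_avoiding ≫ H := rfl
    _ = stdMap foldSection mapsFaces_foldSection_hornFaces ≫ inclusion foldable_le ≫ G := by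
      rw [hH, hG₁]; rfl
    _ = stdMap _ (mapsFaces_fold.comp mapsFaces_foldSection_hornFaces) ≫ F := by rw [hG]; rfl
    _ = F := by rw [stdMap_foldSection_fold, Category.id_comp]

end OuterHorn

section Fillers

variable {X : SSet.{u}} {n : ℕ}

lemma δ_zero_δ_one (t : X _⦋2⦌) : X.δ 0 (X.δ 1 t) = X.δ 0 (X.δ 0 t) :=
  δ_comp_δ_apply (i := 0) (j := 0) le_rfl t

lemma δ_zero_δ_two (t : X _⦋2⦌) : X.δ 0 (X.δ 2 t) = X.δ 1 (X.δ 0 t) :=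
  δ_comp_δ_apply (i := 0) (j := 1) (by decide) t

lemma δ_one_δ_two (t : X _⦋2⦌) : X.δ 1 (X.δ 2 t) = X.δ 1 (X.δ 1 t) :=
  δ_comp_δ_apply (i := 1) (j := 1) le_rfl t

lemma HasFillers.exists_simplex {i : Fin (n + 3)} (h : HasFillers X i)
    (s : Fin (n + 3) → X _⦋n + 1⦌)
    (hs : ∀ j k : Fin (n + 2), j ≤ k → j.castSucc ≠ i → k.succ ≠ i →
      X.δ k (s j.castSucc) = X.δ j (s k.succ)) :
    ∃ t : X _⦋n + 2⦌, ∀ j ≠ i, X.δ j t = s j := by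
  have compatible : horn.IsCompatible fun j (_ : j ≠ i) => yonedaEquiv.symm (s j) := by
    intro j k hj hk hjk
    obtain ⟨j, rfl⟩ := j.eq_castSucc_of_ne_last (Fin.ne_last_of_lt hjk)
    obtain ⟨k, rfl⟩ := k.eq_succ_of_ne_zero (Fin.ne_zero_of_lt hjk)
    rw [Fin.pred_succ, Fin.castPred_castSucc, stdSimplex.δ_comp_yonedaEquiv_symm,
      stdSimplex.δ_comp_yonedaEquiv_symm, hs j k (Fin.castSucc_lt_succ_iff.1 hjk) hj hk]
  obtain ⟨φ, hφ⟩ := compatible.exists_desc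
  obtain ⟨σ, rfl⟩ := h φ
  refine ⟨yonedaEquiv σ, fun j hj => yonedaEquiv.symm.injective ?_⟩
  rw [← hφ j hj, ← stdSimplex.δ_comp_yonedaEquiv_symm, Equiv.symm_apply_apply, horn.ι_ι_assoc]

lemma exists_tetrahedron [Quasicategory X] {t₀ t₁ t₃ : X _⦋2⦌} (h₀₁ : X.δ 0 t₀ = X.δ 0 t₁)
    (h₀₃ : X.δ 2 t₀ = X.δ 0 t₃) (h₁₃ : X.δ 2 t₁ = X.δ 1 t₃) :
    ∃ t : X _⦋3⦌, X.δ 0 t = t₀ ∧ X.δ 1 t = t₁ ∧ X.δ 3 t = t₃ := by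
  have h : HasFillers X (2 : Fin 4) := Quasicategory.hornFilling (by decide) (by decide)
  obtain ⟨t, ht⟩ := h.exists_simplex ![t₀, t₁, t₁, t₃] (by simp [Fin.forall_fin_succ, *])
  exact ⟨t, ht 0 (by decide), ht 1 (by decide), ht 3 (by decide)⟩

end Fillers

section Duality

variable {X Y : SSet.{u}} {n : ℕ} {i : Fin (n + 1)}

lemma HasFillers.of_iso (h : HasFillers X i) (e : X ≅ Y) : HasFillers Y i := fun f => by
  obtain ⟨g, hg⟩ := h (f ≫ e.inv)
  exact ⟨g ≫ e.hom, by rw [← reassoc_of% hg, e.inv_hom_id, Category.comp_id]⟩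

lemma HasFillers.of_op (h : HasFillers X.op i.rev) : HasFillers X i := fun f => by
  rw [HasFillers, ← op_horn] at h
  let f_op : Λ[n, i].op.toSSet ⟶ X.op := opFunctor.map f
  obtain ⟨g, hg⟩ := h (Subcomplex.fromPreimage _ _ ≫ f_op)
  let q : Λ[n, i].op.toSSet ⟶ (Λ[n, i].op.preimage (stdSimplex.opIso ⦋n⦌).inv).toSSet :=
    Subcomplex.lift (Λ[n, i].op.ι ≫ (stdSimplex.opIso ⦋n⦌).hom)
      (by rintro d _ ⟨s, rfl⟩; simpa using s.2)
  have q_fromPreimage : q ≫ Subcomplex.fromPreimage _ _ = 𝟙 _ := by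
    rw [← cancel_mono Λ[n, i].op.ι]
    exact congrArg (Λ[n, i].op.ι ≫ ·) (stdSimplex.opIso ⦋n⦌).hom_inv_id
  let g_op : Δ[n].op ⟶ X.op := (stdSimplex.opIso ⦋n⦌).hom ≫ g
  have f_op_eq : f_op = Λ[n, i].op.ι ≫ g_op := calc
    f_op = q ≫ Subcomplex.fromPreimage _ _ ≫ f_op := by rw [reassoc_of% q_fromPreimage]
    _ = Λ[n, i].op.ι ≫ g_op := by rw [hg]; rfl
  refine ⟨opEquivalence.functor.preimage g_op, opEquivalence.functor.map_injective ?_⟩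
  rw [Functor.map_comp]
  exact f_op_eq.trans (congrArg _ (opEquivalence.functor.map_preimage g_op).symm)

lemma HasFillers.op (h : HasFillers X i) : HasFillers X.op i.rev :=
  .of_op <| by rw [Fin.rev_rev]; exact h.of_iso (opFunctorCompOpFunctorIso.app X).symm

instance [Quasicategory X] : Quasicategory X.op where
  hornFilling' n i f h₀ hn := by
    have h : HasFillers X.op i.rev.rev := .op <| Quasicategory.hornFilling
      (by rwa [← Fin.rev_last, Fin.rev_lt_rev]) (by rwa [← Fin.rev_zero, Fin.rev_lt_rev])
    rw [Fin.rev_rev] at h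
    exact h f

end Duality

section Inverses

variable {X : SSet.{u}} {m n : ℕ}

/-- The map from `Δ[n]`, viewed as a subcomplex of itself, which is given by an `n`-simplex. -/
def ofSimplex (x : X _⦋n⦌) : (stdSubcomplex (⊤ : FaceSet n)).toSSet ⟶ X :=
  (stdSubcomplex ⊤).ι ≫ yonedaEquiv.symm x

lemma exists_ofSimplex_eq (f : (stdSubcomplex (⊤ : FaceSet n)).toSSet ⟶ X) :
    ∃ x, ofSimplex x = f :=
  ⟨yonedaEquiv ((Subcomplex.topIso _).inv ≫ f), by
    rw [ofSimplex, Equiv.symm_apply_apply]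
    exact (Subcomplex.topIso _).hom_inv_id_assoc f⟩

lemma stdMap_comp_ofSimplex {K : FaceSet m} (θ : ⦋m⦌ ⟶ ⦋n⦌)
    (hθ : MapsFaces θ.toOrderHom K ⊤) (x : X _⦋n⦌) :
    stdMap θ.toOrderHom hθ ≫ ofSimplex x = inclusion le_top ≫ ofSimplex (X.map θ.op x) := by
  rw [ofSimplex, ofSimplex, ← yonedaEquiv_symm_naturality_left]
  rfl

lemma inclusion_comp_ofSimplex {K : FaceSet m} {r : Fin (m + 1) → Fin (n + 1)}
    (hr : MapsFaces r K ⊤) {x : X _⦋m⦌} {y : X _⦋n⦌} (ρ : ⦋m⦌ ⟶ ⦋m⦌) (θ : ⦋m⦌ ⟶ ⦋n⦌)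
    (hρ : ∀ S ∈ K, EqOn ρ.toOrderHom id S) (hθ : ∀ S ∈ K, EqOn θ.toOrderHom r S)
    (h : X.map ρ.op x = X.map θ.op y) :
    inclusion (le_top : K ≤ ⊤) ≫ ofSimplex x = stdMap r hr ≫ ofSimplex y := by
  have maps_monotone {p : ℕ} (φ : ⦋m⦌ ⟶ ⦋p⦌) : MapsFaces φ.toOrderHom K ⊤ :=
    fun S _ => ⟨φ.toOrderHom.monotone.monotoneOn S, trivial⟩
  rw [← stdMap_eq_inclusion le_top (hr := maps_monotone ρ) hρ,
    ← stdMap_congr (hr := maps_monotone θ) hθ, stdMap_comp_ofSimplex, stdMap_comp_ofSimplex, h]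

/-- Every edge is the last edge of a 2-simplex whose face `02` is degenerate. -/
def HasRightInverses (X : SSet.{u}) : Prop :=
  ∀ f : X _⦋1⦌, ∃ t : X _⦋2⦌, X.δ 0 t = f ∧ X.δ 1 t = X.σ 0 (X.δ 0 f)

/-- Every edge is the first edge of a 2-simplex whose face `02` is degenerate. -/
def HasLeftInverses (X : SSet.{u}) : Prop :=
  ∀ f : X _⦋1⦌, ∃ t : X _⦋2⦌, X.δ 2 t = f ∧ X.δ 1 t = X.σ 0 (X.δ 1 f)

lemma HasLeftInverses.op (h : HasLeftInverses X) : HasRightInverses X.op := fun f => by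
  obtain ⟨t, ht₂, ht₁⟩ := h (opObjEquiv f)
  refine ⟨opObjEquiv.symm t, ?_, ?_⟩
  · rw [op_δ]
    exact congrArg opObjEquiv.symm ht₂
  · rw [op_δ, op_σ, op_δ]
    exact congrArg opObjEquiv.symm ht₁

lemma isZigzag_ofSimplex {f : X _⦋1⦌} {t : X _⦋3⦌} (h₁ : X.δ 1 t = X.σ 0 f)
    (h₀ : X.δ 1 (X.δ 0 t) = X.σ 0 (X.δ 0 f)) : IsZigzag (ofSimplex f) (ofSimplex t) := by
  refine hom_ext_of_le_sup le_sup_left le_sup_right le_rfl ?_ ?_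
  · refine inclusion_comp_ofSimplex (mapsFaces_parity.comp (.id le_sup_left))
      (SimplexCategory.σ 0 ≫ SimplexCategory.δ 1) (SimplexCategory.σ 0 ≫ SimplexCategory.σ 0)
      (fun S hS v hv => ?_) (fun S hS v hv => ?_) ?_
    · have := hS v hv
      fin_cases v <;> first | rfl | contradiction
    · have := hS v hv
      fin_cases v <;> first | rfl | contradiction
    · simpa [SimplicialObject.δ, SimplicialObject.σ] using congrArg (X.σ 0) h₁
  · refine inclusion_comp_ofSimplex (mapsFaces_parity.comp (.id le_sup_right))
      ((SimplexCategory.σ 0 ≫ SimplexCategory.σ 1) ≫ SimplexCategory.δ 1 ≫ SimplexCategory.δ 0)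
      ((SimplexCategory.σ 0 ≫ SimplexCategory.σ 1) ≫ SimplexCategory.σ 0 ≫ SimplexCategory.δ 0)
      (fun S hS v hv => ?_) (fun S hS v hv => ?_) ?_
    · have := hS.1 v hv
      have := hS.2 v hv
      fin_cases v <;> first | rfl | contradiction
    · have := hS.1 v hv
      have := hS.2 v hv
      fin_cases v <;> first | rfl | contradiction
    · simpa [SimplicialObject.δ, SimplicialObject.σ] using congrArg (fun e => X.σ 0 (X.σ 1 e)) h₀

lemma HasRightInverses.exists_isZigzag [Quasicategory X] (hX : HasRightInverses X)
    (f : (stdSubcomplex (⊤ : FaceSet 1)).toSSet ⟶ X) : ∃ x, IsZigzag f x := by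
  obtain ⟨f, rfl⟩ := exists_ofSimplex_eq f
  obtain ⟨t, rfl, ht₁⟩ := hX f
  obtain ⟨s, hs₀, hs₁⟩ := hX (X.δ 2 t)
  have face_two_σ : X.δ 2 (X.σ 0 (X.δ 0 t)) = X.δ 1 s := calc
    X.δ 2 (X.σ 0 (X.δ 0 t)) = X.σ 0 (X.δ 1 (X.δ 0 t)) :=
      δ_comp_σ_of_gt_apply (i := 1) (j := 0) (by decide) _
    _ = X.σ 0 (X.δ 0 (X.δ 2 t)) := by rw [δ_zero_δ_two]
    _ = X.δ 1 s := hs₁.symm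
  obtain ⟨z, rfl, hz₁, -⟩ := exists_tetrahedron (t₀ := t)
    (δ_comp_σ_self_apply 0 (X.δ 0 t)).symm hs₀.symm face_two_σ
  exact ⟨_, isZigzag_ofSimplex hz₁ ht₁⟩

end Inverses

section KanComplex

variable {X : SSet.{u}} {n : ℕ}

lemma hasFillers_fin_two (X : SSet.{u}) (i : Fin 2) : HasFillers X i :=
  hasExtensions_hornFaces_iff.1 fun f => by
    obtain ⟨j, hj⟩ := exists_ne i
    have maps_const : MapsFaces (m := 1) (n := 1) (fun _ => i) ⊤ (hornFaces i) := fun S _ =>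
      ⟨monotoneOn_const, j, by rintro ⟨_, _, h⟩; exact hj h.symm, hj⟩
    have const_eq_id : ∀ S ∈ hornFaces i, EqOn (fun _ => i) id S := by
      rintro S ⟨k, hkS, hk⟩ v hv
      have : v ≠ k := fun h => hkS (h ▸ hv)
      simp only [id]
      omega
    have inclusion_stdMap : inclusion le_top ≫ stdMap _ maps_const = 𝟙 _ :=
      hom_ext_vertices fun _ s a => const_eq_id _ s.2 (mem_range_self a)
    exact ⟨stdMap _ maps_const ≫ f, by rw [← Category.assoc, inclusion_stdMap, Category.id_comp]⟩

theorem HasRightInverses.hasFillers_zero [Quasicategory X] (hX : HasRightInverses X) :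
    HasFillers X (0 : Fin (n + 3)) :=
  hasExtensions_hornFaces_iff.1 (hasExtensions_of_exists_isZigzag hX.exists_isZigzag)

theorem HasLeftInverses.hasFillers_last [Quasicategory X] (hX : HasLeftInverses X) :
    HasFillers X (Fin.last (n + 2)) :=
  .of_op (by rw [Fin.rev_last]; exact hX.op.hasFillers_zero)

lemma kanComplex_of_hasFillers (h : ∀ (n : ℕ) (i : Fin (n + 2)), HasFillers X i) :
    KanComplex X := by
  rw [KanComplex.iff]
  intro n i f hf
  obtain ⟨φ, hφ⟩ := hf.exists_desc
  obtain ⟨σ, rfl⟩ := h n i φ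
  exact ⟨σ, fun j hj => by rw [← hφ j hj, horn.ι_ι_assoc]⟩

theorem kanComplex_of_hasInverses [Quasicategory X] (hR : HasRightInverses X)
    (hL : HasLeftInverses X) : KanComplex X :=
  kanComplex_of_hasFillers fun n i => by
    obtain _ | n := n
    · exact hasFillers_fin_two X i
    rcases eq_or_ne i 0 with rfl | h₀
    · exact hR.hasFillers_zero
    rcases eq_or_ne i (Fin.last _) with rfl | h_last
    · exact hL.hasFillers_last
    exact Quasicategory.hornFilling (Fin.pos_iff_ne_zero.2 h₀) (Fin.lt_last_iff_ne_last.2 h_last)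

end KanComplex

section HomotopyCategory

open Truncated.HomotopyCategory

variable {X : SSet.{u}}

lemma hasRightInverses_of_kanComplex [KanComplex X] : HasRightInverses X := fun f => by
  have h : HasFillers X (2 : Fin 3) := KanComplex.hornFilling
  obtain ⟨t, ht⟩ := h.exists_simplex ![f, X.σ 0 (X.δ 0 f), f]
    (by simpa [Fin.forall_fin_succ] using (δ_comp_σ_self_apply 0 (X.δ 0 f)).symm)
  exact ⟨t, ht 0 (by decide), ht 1 (by decide)⟩

lemma hasLeftInverses_of_kanComplex [KanComplex X] : HasLeftInverses X := fun f => by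
  have h : HasFillers X (0 : Fin 3) := KanComplex.hornFilling
  obtain ⟨t, ht⟩ := h.exists_simplex ![f, X.σ 0 (X.δ 1 f), f]
    (by simpa [Fin.forall_fin_succ] using δ_comp_σ_succ_apply 0 (X.δ 1 f))
  exact ⟨t, ht 2 (by decide), ht 1 (by decide)⟩

lemma homMk_comp_homMk_eq_id {x y : X _⦋0⦌} {e : Edge x y} {g : Edge y x}
    (h : e.CompStruct g (.id x)) : homMk e.toTruncated ≫ homMk g.toTruncated = 𝟙 _ :=
  (homMk_comp_homMk h.toTruncated).trans (homMk_id (V := (truncation 2).obj X) x)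

lemma HasRightInverses.isSplitEpi_homMk (hX : HasRightInverses X) {x y : X _⦋0⦌}
    (e : Edge x y) : IsSplitEpi (homMk e.toTruncated) := by
  obtain ⟨t, h₀, h₁⟩ := hX e.edge
  rw [e.tgt_eq] at h₁
  let g : Edge y x := .mk (X.δ 2 t)
    (by rw [δ_one_δ_two, h₁]; exact δ_comp_σ_succ_apply 0 y)
    (by rw [δ_zero_δ_two, h₀, e.src_eq])
  exact .mk' ⟨homMk g.toTruncated, homMk_comp_homMk_eq_id (.mk t rfl h₀ h₁)⟩

lemma HasLeftInverses.isSplitMono_homMk (hX : HasLeftInverses X) {x y : X _⦋0⦌}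
    (e : Edge x y) : IsSplitMono (homMk e.toTruncated) := by
  obtain ⟨t, h₂, h₁⟩ := hX e.edge
  rw [e.src_eq] at h₁
  let g : Edge y x := .mk (X.δ 0 t)
    (by rw [← δ_zero_δ_two, h₂, e.tgt_eq])
    (by rw [← δ_zero_δ_one, h₁]; exact δ_comp_σ_self_apply 0 x)
  exact .mk' ⟨homMk g.toTruncated, homMk_comp_homMk_eq_id (.mk t h₂ rfl h₁)⟩

theorem isGroupoid_homotopyCategory_of_hasInverses (hR : HasRightInverses X)
    (hL : HasLeftInverses X) : IsGroupoid ((truncation 2).obj X).HomotopyCategory := by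
  rw [isGroupoid_iff_isomorphisms_eq_top]
  refine morphismProperty_eq_top fun e => ?_
  have : IsSplitEpi (homMk e) := hR.isSplitEpi_homMk (.ofTruncated e)
  have : IsSplitMono (homMk e) := hL.isSplitMono_homMk (.ofTruncated e)
  exact isIso_of_epi_of_isSplitMono (homMk e)

lemma exists_compStruct [Quasicategory X] {x₀ x₁ x₂ : X _⦋0⦌} (e₀₁ : Edge x₀ x₁)
    (e₁₂ : Edge x₁ x₂) :
    ∃ e₀₂ : Edge x₀ x₂, Nonempty (e₀₁.CompStruct e₁₂ e₀₂) := by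
  have h : HasFillers X (1 : Fin 3) := Quasicategory.hornFilling (by decide) (by decide)
  obtain ⟨t, ht⟩ := h.exists_simplex ![e₁₂.edge, e₁₂.edge, e₀₁.edge]
    (by simp [Fin.forall_fin_succ])
  have h₀ : X.δ 0 t = e₁₂.edge := ht 0 (by decide)
  have h₂ : X.δ 2 t = e₀₁.edge := ht 2 (by decide)
  exact ⟨.mk (X.δ 1 t) (by rw [← δ_one_δ_two, h₂, e₀₁.src_eq])
    (by rw [δ_zero_δ_one, h₀, e₁₂.tgt_eq]), ⟨.mk t h₂ h₀ rfl⟩⟩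

section Tetrahedron

variable [Quasicategory X] {x₀ x₁ x₂ x₃ : X _⦋0⦌} {e₀₁ : Edge x₀ x₁} {e₁₂ : Edge x₁ x₂}
  {e₂₃ : Edge x₂ x₃} {e₀₂ : Edge x₀ x₂} {e₁₃ : Edge x₁ x₃} {e₀₃ : Edge x₀ x₃}

lemma nonempty_compStruct_face_one (t₃ : e₀₁.CompStruct e₁₂ e₀₂) (t₀ : e₁₂.CompStruct e₂₃ e₁₃)
    (t₂ : e₀₁.CompStruct e₁₃ e₀₃) : Nonempty (e₀₂.CompStruct e₂₃ e₀₃) := by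
  have h : HasFillers X (1 : Fin 4) := Quasicategory.hornFilling (by decide) (by decide)
  obtain ⟨t, ht⟩ := h.exists_simplex ![t₀.simplex, t₀.simplex, t₂.simplex, t₃.simplex]
    (by simp [Fin.forall_fin_succ])
  have h₀ : X.δ 0 t = t₀.simplex := ht 0 (by decide)
  have h₂ : X.δ 2 t = t₂.simplex := ht 2 (by decide)
  have h₃ : X.δ 3 t = t₃.simplex := ht 3 (by decide)
  have edge₀₂ : X.δ 1 (X.δ 3 t) = X.δ 2 (X.δ 1 t) :=
    δ_comp_δ_apply (i := 1) (j := 2) (by decide) t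
  have edge₂₃ : X.δ 0 (X.δ 1 t) = X.δ 0 (X.δ 0 t) := δ_comp_δ_apply (i := 0) (j := 0) le_rfl t
  have edge₀₃ : X.δ 1 (X.δ 2 t) = X.δ 1 (X.δ 1 t) := δ_comp_δ_apply (i := 1) (j := 1) le_rfl t
  exact ⟨.mk (X.δ 1 t) (by rw [← edge₀₂, h₃, t₃.d₁]) (by rw [edge₂₃, h₀, t₀.d₀])
    (by rw [← edge₀₃, h₂, t₂.d₁])⟩

lemma nonempty_compStruct_face_two (t₃ : e₀₁.CompStruct e₁₂ e₀₂) (t₀ : e₁₂.CompStruct e₂₃ e₁₃)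
    (t₁ : e₀₂.CompStruct e₂₃ e₀₃) : Nonempty (e₀₁.CompStruct e₁₃ e₀₃) := by
  obtain ⟨t, h₀, h₁, h₃⟩ := exists_tetrahedron (t₀.d₀.trans t₁.d₀.symm)
    (t₀.d₂.trans t₃.d₀.symm) (t₁.d₂.trans t₃.d₁.symm)
  have edge₀₁ : X.δ 2 (X.δ 3 t) = X.δ 2 (X.δ 2 t) := δ_comp_δ_apply (i := 2) (j := 2) le_rfl t
  have edge₁₃ : X.δ 0 (X.δ 2 t) = X.δ 1 (X.δ 0 t) :=
    δ_comp_δ_apply (i := 0) (j := 1) (by decide) t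
  have edge₀₃ : X.δ 1 (X.δ 2 t) = X.δ 1 (X.δ 1 t) := δ_comp_δ_apply (i := 1) (j := 1) le_rfl t
  exact ⟨.mk (X.δ 2 t) (by rw [← edge₀₁, h₃, t₃.d₂]) (by rw [edge₁₃, h₀, t₀.d₁])
    (by rw [edge₀₃, h₁, t₁.d₁])⟩

end Tetrahedron

instance [Quasicategory X] : Truncated.Quasicategory₂ ((truncation 2).obj X) where
  fill21 e₀₁ e₁₂ := by
    obtain ⟨e₀₂, ⟨t⟩⟩ := exists_compStruct (.ofTruncated e₀₁) (.ofTruncated e₁₂)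
    exact ⟨e₀₂.toTruncated, t.toTruncated⟩
  fill31 t₃ t₀ t₂ :=
    nonempty_compStruct_face_one (.ofTruncated t₃) (.ofTruncated t₀) (.ofTruncated t₂)
  fill32 t₃ t₀ t₁ :=
    nonempty_compStruct_face_two (.ofTruncated t₃) (.ofTruncated t₀) (.ofTruncated t₁)

/-- The comparison functor from the homotopy category presented by generators and relations to the
one whose morphisms are homotopy classes of edges. -/
noncomputable def toHomotopyCategory₂ (A : Truncated.{u} 2) [Truncated.Quasicategory₂ A] :
    A.HomotopyCategory ⥤ Truncated.HomotopyCategory₂ A :=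
  lift (fun x => .mk x) Truncated.HomotopyCategory₂.homMk
    (fun x => Truncated.HomotopyCategory₂.homMk_id ⟨x⟩) fun t => t.homotopyCategory₂_fac

lemma exists_inverse [Quasicategory X] [IsGroupoid ((truncation 2).obj X).HomotopyCategory]
    {x y : X _⦋0⦌} (e : Edge x y) : ∃ g : Edge y x,
      Nonempty (e.CompStruct g (.id x)) ∧ Nonempty (g.CompStruct e (.id y)) := by
  let f := Truncated.HomotopyCategory₂.homMk e.toTruncated
  have map_homMk : (toHomotopyCategory₂ _).map (homMk e.toTruncated) = f := lift_map_homMk ..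
  have : IsIso f :=
    map_homMk ▸ Functor.map_isIso (toHomotopyCategory₂ _) (homMk e.toTruncated)
  obtain ⟨g, hg⟩ := Truncated.HomotopyCategory₂.homMk_surjective (inv f)
  refine ⟨.ofTruncated g, Truncated.Edge.CompStruct.nonempty_iff.2 ?_,
    Truncated.Edge.CompStruct.nonempty_iff.2 ?_⟩
  · exact (congrArg (f ≫ ·) hg).trans (IsIso.hom_inv_id f)
  · exact (congrArg (· ≫ f) hg).trans (IsIso.inv_hom_id f)

theorem hasInverses_of_isGroupoid_homotopyCategory [Quasicategory X]
    [IsGroupoid ((truncation 2).obj X).HomotopyCategory] :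
    HasRightInverses X ∧ HasLeftInverses X := by
  refine ⟨fun f => ?_, fun f => ?_⟩
  · obtain ⟨g, -, ⟨t⟩⟩ := exists_inverse (.mk' f)
    exact ⟨t.simplex, t.d₀, t.d₁⟩
  · obtain ⟨g, ⟨t⟩, -⟩ := exists_inverse (.mk' f)
    exact ⟨t.simplex, t.d₂, t.d₁⟩

theorem kanComplex_iff_isGroupoid_homotopyCategory [Quasicategory X] :
    KanComplex X ↔ IsGroupoid ((truncation 2).obj X).HomotopyCategory where
  mp _ := isGroupoid_homotopyCategory_of_hasInverses hasRightInverses_of_kanComplex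
    hasLeftInverses_of_kanComplex
  mpr _ := kanComplex_of_hasInverses hasInverses_of_isGroupoid_homotopyCategory.1
    hasInverses_of_isGroupoid_homotopyCategory.2

lemma isGroupoid_congr {C D : Cat.{u, u}} (i : C ≅ D) : IsGroupoid C ↔ IsGroupoid D where
  mp _ := isGroupoid_of_reflects_iso (Cat.equivOfIso i).inverse
  mpr _ := isGroupoid_of_reflects_iso (Cat.equivOfIso i).functor

theorem kanComplex_iff_ho_groupoid_general (ho : SSet.{u} ⥤ Cat.{u, u})
    (adj : ho ⊣ nerveFunctor.{u, u}) (X : SSet.{u}) (hX : Quasicategory X) :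
    KanComplex X ↔ ∀ {a b : ho.obj X} (f : a ⟶ b), IsIso f := by
  have i : ho.obj X ≅ hoFunctor.obj X := (adj.leftAdjointUniq nerveAdjunction).app X
  calc
    KanComplex X ↔ IsGroupoid (hoFunctor.obj X) := kanComplex_iff_isGroupoid_homotopyCategory
    _ ↔ IsGroupoid (ho.obj X) := (isGroupoid_congr i).symm
    _ ↔ ∀ {a b : ho.obj X} (f : a ⟶ b), IsIso f := ⟨fun h => h.all_isIso, fun h => ⟨h⟩⟩

end HomotopyCategory

end Development

theorem kanComplex_iff_ho_groupoid
    (ho : SSet.{0} ⥤ Cat.{0, 0}) (adj : ho ⊣ nerveFunctor)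
    (X : SSet.{0}) (hX : SSet.Quasicategory X) :
    SSet.KanComplex X ↔ ∀ {a b : ho.obj X} (f : a ⟶ b), IsIso f := by
  exact kanComplex_iff_ho_groupoid_general ho adj X hX

end Stmt6
end
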